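/- Let f be a ternary cubic form over ℂ with f₃₃₃ ≠ 0 (the coefficient of x₃³) and 4·f₁₁₃·f₂₂₃ − f₁₂₃² ≠ 0, where f₁₁₃, f₁₂₃, f₂₂₃ are the coefficients of x₁²x₃, x₁x₂x₃, x₂²x₃ in f. Let D = det(∂ᵢ∂ⱼ f) be the Hessian determinant of f, let D₃₃₃ be its coefficient of x₃³, and set g = D₃₃₃·f − f₃₃₃·D. Then f is completely reducible if and only if the coefficients of x₁²x₃, x₁x₂x₃ and x₂²x₃ in g are all zero. -/

import Mathlib

open MvPolynomial

/-- The Hessian determinant `det (∂ᵢ∂ⱼ f)` of a ternary form. -/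
noncomputable def hessianDet (f : MvPolynomial (Fin 3) ℂ) : MvPolynomial (Fin 3) ℂ :=
  Matrix.det (Matrix.of fun i j : Fin 3 => pderiv i (pderiv j f))

/-- A linear form is a homogeneous polynomial of degree 1. -/
def IsLinearForm (a : MvPolynomial (Fin 3) ℂ) : Prop := a.IsHomogeneous 1

/-- A cubic form is completely reducible if it is a product of three linear forms. -/
def CompletelyReducible (f : MvPolynomial (Fin 3) ℂ) : Prop :=
  ∃ a b c : MvPolynomial (Fin 3) ℂ,
    IsLinearForm a ∧ IsLinearForm b ∧ IsLinearForm c ∧ f = a * b * c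

/-! ### Numerical part: factoring the cubic `w³ + w q(x,y) + c(x,y)` -/

/-- `t ↦ F x y t` is a product of three linear forms in the variables `x, y, w`. -/
def Splits3 (F : ℂ → ℂ → ℂ → ℂ) : Prop :=
  ∃ a₁ a₂ a₃ b₁ b₂ b₃ c₁ c₂ c₃ : ℂ, ∀ x y w : ℂ,
    F x y w = (a₁ * x + a₂ * y + a₃ * w) * (b₁ * x + b₂ * y + b₃ * w) *
      (c₁ * x + c₂ * y + c₃ * w)

lemma exists_sq (z : ℂ) : ∃ s : ℂ, s ^ 2 = z := IsAlgClosed.exists_pow_nat_eq z (by norm_num)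

lemma exists_cube (z : ℂ) : ∃ s : ℂ, s ^ 3 = z := IsAlgClosed.exists_pow_nat_eq z (by norm_num)

lemma exists_omega : ∃ o : ℂ, o ^ 2 + o + 1 = 0 := by
  obtain ⟨s, hs⟩ := exists_sq (-3)
  exact ⟨(-1 + s) / 2, by linear_combination hs / 4⟩

/-- A binary quadratic form is a product of two linear forms. -/
lemma quad_factor (q₀ q₁ q₂ : ℂ) : ∃ u₁ u₂ v₁ v₂ : ℂ,
    q₀ = u₁ * v₁ ∧ q₁ = u₁ * v₂ + u₂ * v₁ ∧ q₂ = u₂ * v₂ := by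
  by_cases h : q₀ = 0
  · exact ⟨0, 1, q₁, q₂, by simp [h], by ring, by ring⟩
  · obtain ⟨s, hs⟩ := exists_sq (q₁ ^ 2 - 4 * q₀ * q₂)
    refine ⟨q₀, (q₁ - s) / 2, 1, (q₁ + s) / (2 * q₀), by ring, by field_simp; ring, ?_⟩
    field_simp
    linear_combination hs

/-- A binary quadratic form of discriminant zero is a square. -/
lemma quad_square (q₀ q₁ q₂ : ℂ) (h : 4 * q₀ * q₂ - q₁ ^ 2 = 0) : ∃ r₁ r₂ : ℂ,
    q₀ = r₁ ^ 2 ∧ q₁ = 2 * r₁ * r₂ ∧ q₂ = r₂ ^ 2 := by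
  obtain ⟨s, hs⟩ := exists_sq q₀
  by_cases h0 : q₀ = 0
  · obtain ⟨t, ht⟩ := exists_sq q₂
    have h1 : q₁ = 0 := by
      have : q₁ ^ 2 = 0 := by rw [h0] at h; linear_combination -h
      simpa using this
    exact ⟨0, t, by simp [h0], by simp [h1], ht.symm⟩
  · have hs0 : s ≠ 0 := by rintro rfl; apply h0; rw [← hs]; ring
    refine ⟨s, q₁ / (2 * s), hs.symm, by field_simp, ?_⟩
    field_simp
    rw [hs]
    linear_combination h

/-- The depressed binary cubic splits. -/
lemma cubic_roots (s α : ℂ) : ∃ a b c : ℂ,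
    a + b + c = 0 ∧ a * b + b * c + c * a = s ∧ a * b * c = α := by
  have hroot : ∃ a : ℂ, a ^ 3 + s * a - α = 0 := by
    let P : Polynomial ℂ := Polynomial.X ^ 3 + Polynomial.C s * Polynomial.X - Polynomial.C α
    have hdeg : P.degree = 3 := by
      simp only [P]
      compute_degree!
    obtain ⟨a, ha⟩ := IsAlgClosed.exists_root P (by rw [hdeg]; norm_num)
    exact ⟨a, by simpa [P, Polynomial.IsRoot] using ha⟩
  obtain ⟨a, ha⟩ := hroot
  obtain ⟨t, ht⟩ := exists_sq (a ^ 2 - 4 * (s + a ^ 2))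
  refine ⟨a, (-a + t) / 2, (-a - t) / 2, by ring, ?_, ?_⟩
  · linear_combination -ht / 4
  · linear_combination -a * ht / 4 + ha

/-- Cubics depending only on `w` and one linear form split. -/
lemma splits_of_binary (s α r₁ r₂ : ℂ) :
    Splits3 fun x y w => w ^ 3 + w * (s * (r₁ * x + r₂ * y) ^ 2) + α * (r₁ * x + r₂ * y) ^ 3 := by
  obtain ⟨a, b, c, h1, h2, h3⟩ := cubic_roots s α
  refine ⟨a * r₁, a * r₂, 1, b * r₁, b * r₂, 1, c * r₁, c * r₂, 1, fun x y w => ?_⟩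
  simp only
  rw [← h2, ← h3]
  linear_combination - w ^ 2 * (r₁ * x + r₂ * y) * h1

/-- A binary cubic with vanishing Hessian is a multiple of a cube. -/
lemma cube_of_hessian (c₀ c₁ c₂ c₃ : ℂ) (h1 : 3 * c₀ * c₂ = c₁ ^ 2)
    (h2 : 9 * c₀ * c₃ = c₁ * c₂) (h3 : 3 * c₁ * c₃ = c₂ ^ 2) : ∃ α r₁ r₂ : ℂ,
    ∀ x y : ℂ, c₀ * x ^ 3 + c₁ * x ^ 2 * y + c₂ * x * y ^ 2 + c₃ * y ^ 3
      = α * (r₁ * x + r₂ * y) ^ 3 := by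
  by_cases h0 : c₀ = 0
  · subst h0
    have hc1 : c₁ = 0 := by
      have : c₁ ^ 2 = 0 := by rw [← h1]; ring
      simpa using this
    subst hc1
    have hc2 : c₂ = 0 := by
      have : c₂ ^ 2 = 0 := by rw [← h3]; ring
      simpa using this
    subst hc2
    exact ⟨c₃, 0, 1, fun x y => by ring⟩
  · refine ⟨c₀, 1, c₁ / (3 * c₀), fun x y => ?_⟩
    have e2 : c₂ = c₁ ^ 2 / (3 * c₀) := by field_simp; linear_combination h1
    have e3 : c₃ = c₁ ^ 3 / (27 * c₀ ^ 2) := by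
      rw [e2] at h2
      field_simp at h2 ⊢
      linear_combination h2
    rw [e2, e3]
    field_simp
    ring

/-- A binary cubic in a new basis. -/
lemma cubic_basis (u₁ u₂ v₁ v₂ c₀ c₁ c₂ c₃ : ℂ) (h : u₁ * v₂ - u₂ * v₁ ≠ 0) :
    ∃ α β γ δ : ℂ,
      c₀ = α * u₁ ^ 3 + β * u₁ ^ 2 * v₁ + γ * u₁ * v₁ ^ 2 + δ * v₁ ^ 3 ∧
      c₁ = 3 * α * u₁ ^ 2 * u₂ + β * (2 * u₁ * u₂ * v₁ + u₁ ^ 2 * v₂)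
        + γ * (u₂ * v₁ ^ 2 + 2 * u₁ * v₁ * v₂) + 3 * δ * v₁ ^ 2 * v₂ ∧
      c₂ = 3 * α * u₁ * u₂ ^ 2 + β * (u₂ ^ 2 * v₁ + 2 * u₁ * u₂ * v₂)
        + γ * (2 * u₂ * v₁ * v₂ + u₁ * v₂ ^ 2) + 3 * δ * v₁ * v₂ ^ 2 ∧
      c₃ = α * u₂ ^ 3 + β * u₂ ^ 2 * v₂ + γ * u₂ * v₂ ^ 2 + δ * v₂ ^ 3 := by
  obtain ⟨D, hD⟩ : ∃ D, D = u₁ * v₂ - u₂ * v₁ := ⟨_, rfl⟩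
  rw [← hD] at h
  refine ⟨(c₀ * v₂ ^ 3 - c₁ * v₂ ^ 2 * v₁ + c₂ * v₂ * v₁ ^ 2 - c₃ * v₁ ^ 3) / D ^ 3,
    (-3 * c₀ * v₂ ^ 2 * u₂ + c₁ * (v₂ ^ 2 * u₁ + 2 * v₁ * v₂ * u₂)
      - c₂ * (v₁ ^ 2 * u₂ + 2 * v₁ * v₂ * u₁) + 3 * c₃ * v₁ ^ 2 * u₁) / D ^ 3,
    (3 * c₀ * v₂ * u₂ ^ 2 - c₁ * (v₁ * u₂ ^ 2 + 2 * v₂ * u₁ * u₂)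
      + c₂ * (v₂ * u₁ ^ 2 + 2 * v₁ * u₁ * u₂) - 3 * c₃ * v₁ * u₁ ^ 2) / D ^ 3,
    (-c₀ * u₂ ^ 3 + c₁ * u₂ ^ 2 * u₁ - c₂ * u₂ * u₁ ^ 2 + c₃ * u₁ ^ 3) / D ^ 3, ?_, ?_, ?_, ?_⟩ <;>
  · field_simp
    rw [hD]
    ring

lemma linear_basis (u₁ u₂ v₁ v₂ m₁ m₂ : ℂ) (h : u₁ * v₂ - u₂ * v₁ ≠ 0) :
    ∃ s t : ℂ, m₁ = s * u₁ + t * v₁ ∧ m₂ = s * u₂ + t * v₂ := by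
  obtain ⟨D, hD⟩ : ∃ D, D = u₁ * v₂ - u₂ * v₁ := ⟨_, rfl⟩
  rw [← hD] at h
  refine ⟨(m₁ * v₂ - m₂ * v₁) / D, (m₂ * u₁ - m₁ * u₂) / D, ?_, ?_⟩ <;>
  · field_simp
    rw [hD]
    ring

/-- The case of a nondegenerate quadratic part, in adapted coordinates `q = u v`. -/
lemma uv_case (α β γ δ s t : ℂ)
    (e1 : 3 * α * γ = β ^ 2 + 2 * s * β) (e2 : 3 * β * δ = γ ^ 2 + 2 * t * γ)
    (e3 : 1 + 27 * α * δ = 3 * β * γ + 6 * (s * γ + t * β))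
    (hd : 1 + 12 * s * t ≠ 0) : β = 0 ∧ γ = 0 ∧ 27 * α * δ = -1 := by
  have hb : β * (1 + 12 * s * t) = 0 := by
    linear_combination β * e3 - 6 * t * e1 - 3 * γ * e1 - 9 * α * e2
  have hc : γ * (1 + 12 * s * t) = 0 := by
    linear_combination γ * e3 - 6 * s * e2 - 9 * δ * e1 - 3 * β * e2
  have hb' : β = 0 := by simpa [hd] using hb
  have hc' : γ = 0 := by simpa [hd] using hc
  refine ⟨hb', hc', ?_⟩
  subst hb' hc'
  linear_combination e3

/-- The case of a degenerate quadratic part, in adapted coordinates `q = r²`. -/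
lemma rr_case (α β γ δ m n : ℂ)
    (e1 : (3 * α + 2 * m) * γ = β ^ 2) (e2 : 3 * (3 * α + 2 * m) * δ + 2 * n * γ = β * γ)
    (e3 : 3 * δ * (β + 2 * n) = γ ^ 2) (hn : n ≠ 0) : β = 0 ∧ γ = 0 ∧ δ = 0 := by
  have hδ : n ^ 2 * δ = 0 := by
    linear_combination (γ * e2 - 3 * δ * e1) / 12
      + (2 * n - β) / 12 * e3
  have hδ' : δ = 0 := by simpa [hn] using hδ
  subst hδ'
  have hγ : γ = 0 := by
    have : γ ^ 2 = 0 := by rw [← e3]; ring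
    simpa using this
  subst hγ
  have hβ : β = 0 := by
    have : β ^ 2 = 0 := by rw [← e1]; ring
    simpa using this
  exact ⟨hβ, rfl, rfl⟩

/-- The key factorization `w³ + w u v + α u³ + δ v³` with `27 α δ = -1`. -/
lemma splits_uv (α δ u₁ u₂ v₁ v₂ : ℂ) (h : 27 * α * δ = -1) :
    Splits3 fun x y w => w ^ 3 + w * ((u₁ * x + u₂ * y) * (v₁ * x + v₂ * y))
      + (α * (u₁ * x + u₂ * y) ^ 3 + δ * (v₁ * x + v₂ * y) ^ 3) := by
  obtain ⟨o, ho⟩ := exists_omega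
  obtain ⟨p, hp⟩ := exists_cube α
  have hp0 : p ≠ 0 := by
    rintro rfl
    rw [← hp] at h
    norm_num at h
  obtain ⟨r, hr⟩ : ∃ r : ℂ, 3 * p * r = -1 := ⟨-1 / (3 * p), by field_simp⟩
  have hδ : δ = r ^ 3 := by
    have h1 : p ^ 3 * (δ - r ^ 3) = 0 := by
      have : (3 * p * r) ^ 3 = (-1) ^ 3 := by rw [hr]
      rw [← hp] at h
      linear_combination (h - this) / 27
    have h2 : δ - r ^ 3 = 0 := by simpa [hp0] using h1
    linear_combination h2
  refine ⟨p * u₁ + r * v₁, p * u₂ + r * v₂, 1, o * p * u₁ + o ^ 2 * r * v₁,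
    o * p * u₂ + o ^ 2 * r * v₂, 1, o ^ 2 * p * u₁ + o * r * v₁,
    o ^ 2 * p * u₂ + o * r * v₂, 1, fun x y w => ?_⟩
  simp only
  rw [hδ, ← hp]
  have ho' : o ^ 2 = -o - 1 := by linear_combination ho
  have key : ∀ P S : ℂ, w ^ 3 + P ^ 3 + S ^ 3 - 3 * w * P * S =
      (w + P + S) * (w + o * P + o ^ 2 * S) * (w + o ^ 2 * P + o * S) := by
    intro P S
    rw [ho']
    linear_combination (P ^ 3 + S ^ 3 + w * P ^ 2 + w * S ^ 2 - P * S ^ 2 - P ^ 2 * S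
      - 2 * w * P * S) * ho
  have := key (p * (u₁ * x + u₂ * y)) (r * (v₁ * x + v₂ * y))
  linear_combination this + w * ((u₁ * x + u₂ * y) * (v₁ * x + v₂ * y)) * hr

/-- The core of the converse direction, for the depressed cubic `w³ + w q + c` with
`w = z + m₁ x + m₂ y`. -/
lemma core (q₀ q₁ q₂ c₀ c₁ c₂ c₃ m₁ m₂ : ℂ)
    (E1 : (4 * q₀ * q₂ - q₁ ^ 2) * q₀ - 3 * (3 * c₀ * c₂ - c₁ ^ 2)
      - 6 * m₁ * (3 * q₂ * c₀ - q₁ * c₁ + q₀ * c₂) = 0)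
    (E2 : (4 * q₀ * q₂ - q₁ ^ 2) * q₁ - 3 * (9 * c₀ * c₃ - c₁ * c₂)
      - 6 * (m₁ * (q₂ * c₁ - q₁ * c₂ + 3 * q₀ * c₃)
        + m₂ * (3 * q₂ * c₀ - q₁ * c₁ + q₀ * c₂)) = 0)
    (E3 : (4 * q₀ * q₂ - q₁ ^ 2) * q₂ - 3 * (3 * c₁ * c₃ - c₂ ^ 2)
      - 6 * m₂ * (q₂ * c₁ - q₁ * c₂ + 3 * q₀ * c₃) = 0)
    (hd : 4 * (q₀ + 3 * m₁ ^ 2) * (q₂ + 3 * m₂ ^ 2) - (q₁ + 6 * m₁ * m₂) ^ 2 ≠ 0) :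
    Splits3 fun x y w => w ^ 3 + w * (q₀ * x ^ 2 + q₁ * x * y + q₂ * y ^ 2)
      + (c₀ * x ^ 3 + c₁ * x ^ 2 * y + c₂ * x * y ^ 2 + c₃ * y ^ 3) := by
  by_cases hq : 4 * q₀ * q₂ - q₁ ^ 2 = 0
  · obtain ⟨r₁, r₂, rfl, rfl, rfl⟩ := quad_square q₀ q₁ q₂ hq
    by_cases hr : r₁ = 0 ∧ r₂ = 0
    · obtain ⟨rfl, rfl⟩ := hr
      obtain ⟨α, s₁, s₂, hs⟩ := cube_of_hessian c₀ c₁ c₂ c₃ (by linear_combination -E1 / 3)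
        (by linear_combination -E2 / 3) (by linear_combination -E3 / 3)
      obtain ⟨a₁, a₂, a₃, b₁, b₂, b₃, d₁, d₂, d₃, h⟩ := splits_of_binary 0 α s₁ s₂
      refine ⟨a₁, a₂, a₃, b₁, b₂, b₃, d₁, d₂, d₃, fun x y w => ?_⟩
      rw [← h]
      simp only
      rw [hs]
      ring
    · obtain ⟨w₁, w₂, hw⟩ : ∃ w₁ w₂ : ℂ, r₁ * w₂ - r₂ * w₁ ≠ 0 := by
        by_cases h1 : r₁ = 0
        · have h2 : r₂ ≠ 0 := fun h2 => hr ⟨h1, h2⟩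
          exact ⟨1, 0, by simpa [h1] using h2⟩
        · exact ⟨0, 1, by simpa using h1⟩
      obtain ⟨α, β, γ, δ, rfl, rfl, rfl, rfl⟩ := cubic_basis r₁ r₂ w₁ w₂ c₀ c₁ c₂ c₃ hw
      obtain ⟨s, t, rfl, rfl⟩ := linear_basis r₁ r₂ w₁ w₂ m₁ m₂ hw
      have ht : t ≠ 0 := by
        rintro rfl
        apply hd
        ring
      have hw4 : (r₁ * w₂ - r₂ * w₁) ^ 4 ≠ 0 := pow_ne_zero _ hw
      have e1 : (r₁ * w₂ - r₂ * w₁) ^ 4 * ((3 * α + 2 * s) * γ - β ^ 2) = 0 := by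
        linear_combination -(w₂ ^ 2 * E1 - w₁ * w₂ * E2 + w₁ ^ 2 * E3) / 3
      have e2 : (r₁ * w₂ - r₂ * w₁) ^ 4 *
          (3 * (3 * α + 2 * s) * δ + 2 * t * γ - β * γ) = 0 := by
        linear_combination -(-2 * w₂ * r₂ * E1 + (w₂ * r₁ + w₁ * r₂) * E2 - 2 * w₁ * r₁ * E3) / 3
      have e3 : (r₁ * w₂ - r₂ * w₁) ^ 4 * (3 * δ * (β + 2 * t) - γ ^ 2) = 0 := by
        linear_combination -(r₂ ^ 2 * E1 - r₁ * r₂ * E2 + r₁ ^ 2 * E3) / 3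
      obtain ⟨rfl, rfl, rfl⟩ := rr_case α β γ δ s t
        (sub_eq_zero.mp ((mul_eq_zero.mp e1).resolve_left hw4))
        (sub_eq_zero.mp ((mul_eq_zero.mp e2).resolve_left hw4))
        (sub_eq_zero.mp ((mul_eq_zero.mp e3).resolve_left hw4)) ht
      obtain ⟨a₁, a₂, a₃, b₁, b₂, b₃, d₁, d₂, d₃, h⟩ := splits_of_binary 1 α r₁ r₂
      refine ⟨a₁, a₂, a₃, b₁, b₂, b₃, d₁, d₂, d₃, fun x y w => ?_⟩
      rw [← h]
      ring
  · obtain ⟨u₁, u₂, v₁, v₂, rfl, rfl, rfl⟩ := quad_factor q₀ q₁ q₂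
    have hw : u₁ * v₂ - u₂ * v₁ ≠ 0 := by
      intro h
      apply hq
      linear_combination -(u₁ * v₂ - u₂ * v₁) * h
    obtain ⟨α, β, γ, δ, rfl, rfl, rfl, rfl⟩ := cubic_basis u₁ u₂ v₁ v₂ c₀ c₁ c₂ c₃ hw
    obtain ⟨s, t, rfl, rfl⟩ := linear_basis u₁ u₂ v₁ v₂ m₁ m₂ hw
    have hst : 1 + 12 * s * t ≠ 0 := by
      intro h
      apply hd
      linear_combination -(u₁ * v₂ - u₂ * v₁) ^ 2 * h
    have hw4 : (u₁ * v₂ - u₂ * v₁) ^ 4 ≠ 0 := pow_ne_zero _ hw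
    have e1 : (u₁ * v₂ - u₂ * v₁) ^ 4 * (3 * α * γ - (β ^ 2 + 2 * s * β)) = 0 := by
      linear_combination -(v₂ ^ 2 * E1 - v₁ * v₂ * E2 + v₁ ^ 2 * E3) / 3
    have e2 : (u₁ * v₂ - u₂ * v₁) ^ 4 * (3 * β * δ - (γ ^ 2 + 2 * t * γ)) = 0 := by
      linear_combination -(u₂ ^ 2 * E1 - u₁ * u₂ * E2 + u₁ ^ 2 * E3) / 3
    have e3 : (u₁ * v₂ - u₂ * v₁) ^ 4 *
        (1 + 27 * α * δ - (3 * β * γ + 6 * (s * γ + t * β))) = 0 := by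
      linear_combination -(-2 * v₂ * u₂ * E1 + (v₂ * u₁ + v₁ * u₂) * E2 - 2 * v₁ * u₁ * E3)
    obtain ⟨rfl, rfl, h27⟩ := uv_case α β γ δ s t
      (sub_eq_zero.mp ((mul_eq_zero.mp e1).resolve_left hw4))
      (sub_eq_zero.mp ((mul_eq_zero.mp e2).resolve_left hw4))
      (sub_eq_zero.mp ((mul_eq_zero.mp e3).resolve_left hw4)) hst
    obtain ⟨a₁, a₂, a₃, b₁, b₂, b₃, d₁, d₂, d₃, h⟩ := splits_uv α δ u₁ u₂ v₁ v₂ h27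
    refine ⟨a₁, a₂, a₃, b₁, b₂, b₃, d₁, d₂, d₃, fun x y w => ?_⟩
    rw [← h]
    ring

/-- Converse direction in terms of the ten coefficients. -/
lemma converse_num (a b c d e p h l n k : ℂ) (hk : k ≠ 0) (hd : 4 * e * h - p ^ 2 ≠ 0)
    (E1 : (24*e*h*k - 8*e*n*n - 8*h*l*l - 6*k*p*p + 8*l*n*p) * e
      - k * (72*a*c*k + 24*a*h*l - 24*a*n*p - 24*b*b*k + 16*b*e*n - 8*c*e*l - 8*e*e*h
        + 2*e*p*p) = 0)
    (E2 : (24*e*h*k - 8*e*n*n - 8*h*l*l - 6*k*p*p + 8*l*n*p) * p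
      - k * (216*a*d*k - 24*a*h*n - 24*b*c*k + 24*b*h*l - 8*b*n*p + 24*c*e*n - 8*c*l*p
        - 24*d*e*l - 8*e*h*p + 2*p*p*p) = 0)
    (E3 : (24*e*h*k - 8*e*n*n - 8*h*l*l - 6*k*p*p + 8*l*n*p) * h
      - k * (72*b*d*k - 8*b*h*n - 24*c*c*k + 16*c*h*l + 24*d*e*n - 24*d*l*p - 8*e*h*h
        + 2*h*p*p) = 0) :
    Splits3 fun x y z => a * x ^ 3 + b * x ^ 2 * y + c * x * y ^ 2 + d * y ^ 3
      + e * x ^ 2 * z + p * x * y * z + h * y ^ 2 * z + l * x * z ^ 2 + n * y * z ^ 2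
      + k * z ^ 3 := by
  obtain ⟨m₁, rfl⟩ : ∃ m₁, l = 3 * k * m₁ := ⟨l / (3 * k), by field_simp⟩
  obtain ⟨m₂, rfl⟩ : ∃ m₂, n = 3 * k * m₂ := ⟨n / (3 * k), by field_simp⟩
  obtain ⟨q₀, rfl⟩ : ∃ q, e = k * (q + 3 * m₁ ^ 2) := ⟨e / k - 3 * m₁ ^ 2, by field_simp; ring⟩
  obtain ⟨q₁, rfl⟩ : ∃ q, p = k * (q + 6 * m₁ * m₂) :=
    ⟨p / k - 6 * m₁ * m₂, by field_simp; ring⟩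
  obtain ⟨q₂, rfl⟩ : ∃ q, h = k * (q + 3 * m₂ ^ 2) := ⟨h / k - 3 * m₂ ^ 2, by field_simp; ring⟩
  obtain ⟨c₀, rfl⟩ : ∃ t, a = k * (m₁ ^ 3 + m₁ * q₀ + t) :=
    ⟨a / k - (m₁ ^ 3 + m₁ * q₀), by field_simp; ring⟩
  obtain ⟨c₁, rfl⟩ : ∃ t, b = k * (3 * m₁ ^ 2 * m₂ + m₁ * q₁ + m₂ * q₀ + t) :=
    ⟨b / k - (3 * m₁ ^ 2 * m₂ + m₁ * q₁ + m₂ * q₀), by field_simp; ring⟩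
  obtain ⟨c₂, rfl⟩ : ∃ t, c = k * (3 * m₁ * m₂ ^ 2 + m₁ * q₂ + m₂ * q₁ + t) :=
    ⟨c / k - (3 * m₁ * m₂ ^ 2 + m₁ * q₂ + m₂ * q₁), by field_simp; ring⟩
  obtain ⟨c₃, rfl⟩ : ∃ t, d = k * (m₂ ^ 3 + m₂ * q₂ + t) :=
    ⟨d / k - (m₂ ^ 3 + m₂ * q₂), by field_simp; ring⟩
  have hk4 : 8 * k ^ 4 ≠ 0 := by simp [hk]
  obtain ⟨a₁, a₂, a₃, b₁, b₂, b₃, d₁, d₂, d₃, H⟩ := core q₀ q₁ q₂ c₀ c₁ c₂ c₃ m₁ m₂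
    (by apply (mul_eq_zero.mp ?_).resolve_left hk4; linear_combination E1)
    (by apply (mul_eq_zero.mp ?_).resolve_left hk4; linear_combination E2)
    (by apply (mul_eq_zero.mp ?_).resolve_left hk4; linear_combination E3)
    (by intro h0; apply hd; linear_combination k ^ 2 * h0)
  refine ⟨k * (a₁ + a₃ * m₁), k * (a₂ + a₃ * m₂), k * a₃, b₁ + b₃ * m₁, b₂ + b₃ * m₂, b₃,
    d₁ + d₃ * m₁, d₂ + d₃ * m₂, d₃, fun x y z => ?_⟩
  have := H x y (z + m₁ * x + m₂ * y)
  simp only at this ⊢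
  linear_combination k * this

/-! ### Polynomial part -/

/-- The ternary cubic form with given coefficients. -/
noncomputable def cub (a b c d e p h l n k : ℂ) : MvPolynomial (Fin 3) ℂ :=
  C a * X 0 ^ 3 + C b * X 0 ^ 2 * X 1 + C c * X 0 * X 1 ^ 2 + C d * X 1 ^ 3
    + C e * X 0 ^ 2 * X 2 + C p * X 0 * X 1 * X 2 + C h * X 1 ^ 2 * X 2
    + C l * X 0 * X 2 ^ 2 + C n * X 1 * X 2 ^ 2 + C k * X 2 ^ 3

/-- The exponent vector `(i, j, k)`. -/
noncomputable def ex (i j k : ℕ) : Fin 3 →₀ ℕ :=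
  Finsupp.single 0 i + Finsupp.single 1 j + Finsupp.single 2 k

lemma ex_inj (i j k i' j' k' : ℕ) : ex i j k = ex i' j' k' ↔ i = i' ∧ j = j' ∧ k = k' := by
  constructor
  · intro h
    have h0 := DFunLike.congr_fun h 0
    have h1 := DFunLike.congr_fun h 1
    have h2 := DFunLike.congr_fun h 2
    simp [ex] at h0 h1 h2
    exact ⟨h0, h1, h2⟩
  · rintro ⟨rfl, rfl, rfl⟩; rfl

lemma ex_eta (m : Fin 3 →₀ ℕ) : m = ex (m 0) (m 1) (m 2) := by
  ext i
  fin_cases i <;> simp [ex]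

lemma monomial_ex (i j k : ℕ) (a : ℂ) :
    monomial (ex i j k) a = C a * X 0 ^ i * X 1 ^ j * X 2 ^ k := by
  rw [monomial_eq, ex, Finsupp.prod_fintype _ _ (by simp)]
  simp [Fin.prod_univ_three, mul_assoc]

lemma cub_eq (a b c d e p h l n k : ℂ) : cub a b c d e p h l n k =
    monomial (ex 3 0 0) a + monomial (ex 2 1 0) b + monomial (ex 1 2 0) c
    + monomial (ex 0 3 0) d + monomial (ex 2 0 1) e + monomial (ex 1 1 1) p
    + monomial (ex 0 2 1) h + monomial (ex 1 0 2) l + monomial (ex 0 1 2) n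
    + monomial (ex 0 0 3) k := by
  simp only [monomial_ex, cub]
  ring

lemma coeff_cub (a b c d e p h l n k : ℂ) (i j r : ℕ) :
    coeff (ex i j r) (cub a b c d e p h l n k) =
    (if 3 = i ∧ 0 = j ∧ 0 = r then a else 0) + (if 2 = i ∧ 1 = j ∧ 0 = r then b else 0)
    + (if 1 = i ∧ 2 = j ∧ 0 = r then c else 0) + (if 0 = i ∧ 3 = j ∧ 0 = r then d else 0)
    + (if 2 = i ∧ 0 = j ∧ 1 = r then e else 0) + (if 1 = i ∧ 1 = j ∧ 1 = r then p else 0)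
    + (if 0 = i ∧ 2 = j ∧ 1 = r then h else 0) + (if 1 = i ∧ 0 = j ∧ 2 = r then l else 0)
    + (if 0 = i ∧ 1 = j ∧ 2 = r then n else 0) + (if 0 = i ∧ 0 = j ∧ 3 = r then k else 0) := by
  simp only [cub_eq, coeff_add, coeff_monomial, ex_inj]

lemma degree_ex (i j k : ℕ) : (ex i j k).degree = i + j + k := by
  rw [Finsupp.degree_eq_sum]
  simp [ex, Fin.sum_univ_three]

lemma cubic_eq_cub (f : MvPolynomial (Fin 3) ℂ) (hf : f.IsHomogeneous 3) :
    f = cub (f.coeff (ex 3 0 0)) (f.coeff (ex 2 1 0)) (f.coeff (ex 1 2 0)) (f.coeff (ex 0 3 0))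
      (f.coeff (ex 2 0 1)) (f.coeff (ex 1 1 1)) (f.coeff (ex 0 2 1)) (f.coeff (ex 1 0 2))
      (f.coeff (ex 0 1 2)) (f.coeff (ex 0 0 3)) := by
  ext m
  obtain ⟨i, j, r, rfl⟩ : ∃ i j r, m = ex i j r := ⟨_, _, _, ex_eta m⟩
  rw [coeff_cub]
  by_cases hm : i + j + r = 3
  · have hi : i ≤ 3 := by omega
    have hj : j ≤ 3 := by omega
    obtain rfl : r = 3 - i - j := by omega
    interval_cases i <;> interval_cases j <;> first | omega | simp
  · rw [hf.coeff_eq_zero (by rw [degree_ex]; exact hm)]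
    repeat rw [if_neg (by omega)]
    simp

lemma linear_eq (f : MvPolynomial (Fin 3) ℂ) (hf : f.IsHomogeneous 1) :
    ∃ a b c : ℂ, f = C a * X 0 + C b * X 1 + C c * X 2 := by
  refine ⟨f.coeff (ex 1 0 0), f.coeff (ex 0 1 0), f.coeff (ex 0 0 1), ?_⟩
  have : ∀ a b c : ℂ, C a * X 0 + C b * X 1 + C c * X 2 =
      (monomial (ex 1 0 0) a + monomial (ex 0 1 0) b + monomial (ex 0 0 1) c :
        MvPolynomial (Fin 3) ℂ) := by
    intro a b c
    simp only [monomial_ex]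
    ring
  rw [this]
  ext m
  obtain ⟨i, j, r, rfl⟩ : ∃ i j r, m = ex i j r := ⟨_, _, _, ex_eta m⟩
  simp only [coeff_add, coeff_monomial, ex_inj]
  by_cases hm : i + j + r = 1
  · have hi : i ≤ 1 := by omega
    have hj : j ≤ 1 := by omega
    obtain rfl : r = 1 - i - j := by omega
    interval_cases i <;> interval_cases j <;> first | omega | simp
  · rw [hf.coeff_eq_zero (by rw [degree_ex]; exact hm)]
    repeat rw [if_neg (by omega)]
    simp

/-- A quadratic form with given coefficients (of `x², xy, y², xz, yz, z²`). -/
noncomputable def qua (a b c d e p : ℂ) : MvPolynomial (Fin 3) ℂ :=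
  C a * X 0 ^ 2 + C b * X 0 * X 1 + C c * X 1 ^ 2 + C d * X 0 * X 2 + C e * X 1 * X 2
    + C p * X 2 ^ 2

lemma pderiv_cub (a b c d e p h l n k : ℂ) :
    pderiv 0 (cub a b c d e p h l n k) = qua (3 * a) (2 * b) c (2 * e) p l ∧
    pderiv 1 (cub a b c d e p h l n k) = qua b (2 * c) (3 * d) p (2 * h) n ∧
    pderiv 2 (cub a b c d e p h l n k) = qua e p h (2 * l) (2 * n) (3 * k) := by
  refine ⟨?_, ?_, ?_⟩ <;>
  · apply MvPolynomial.funext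
    intro x
    simp [cub, qua, Derivation.leibniz_pow]
    ring

lemma pderiv_qua (a b c d e p : ℂ) :
    pderiv 0 (qua a b c d e p) = C (2 * a) * X 0 + C b * X 1 + C d * X 2 ∧
    pderiv 1 (qua a b c d e p) = C b * X 0 + C (2 * c) * X 1 + C e * X 2 ∧
    pderiv 2 (qua a b c d e p) = C d * X 0 + C e * X 1 + C (2 * p) * X 2 := by
  refine ⟨?_, ?_, ?_⟩ <;>
  · apply MvPolynomial.funext
    intro x
    simp [qua, Derivation.leibniz_pow]
    ring

lemma hessianDet_cub (a b c d e p h l n k : ℂ) : hessianDet (cub a b c d e p h l n k) = cub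
    (24*a*c*l - 6*a*p*p - 8*b*b*l + 8*b*e*p - 8*c*e*e)
    (24*a*c*n + 72*a*d*l - 24*a*h*p - 8*b*b*n - 8*b*c*l + 16*b*e*h + 2*b*p*p - 24*d*e*e)
    (72*a*d*n - 24*a*h*h - 8*b*c*n + 24*b*d*l - 8*c*c*l + 16*c*e*h + 2*c*p*p - 24*d*e*p)
    (24*b*d*n - 8*b*h*h - 8*c*c*n + 8*c*h*p - 6*d*p*p)
    (72*a*c*k + 24*a*h*l - 24*a*n*p - 24*b*b*k + 16*b*e*n - 8*c*e*l - 8*e*e*h + 2*e*p*p)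
    (216*a*d*k - 24*a*h*n - 24*b*c*k + 24*b*h*l - 8*b*n*p + 24*c*e*n - 8*c*l*p
        - 24*d*e*l - 8*e*h*p + 2*p*p*p)
    (72*b*d*k - 8*b*h*n - 24*c*c*k + 16*c*h*l + 24*d*e*n - 24*d*l*p - 8*e*h*h + 2*h*p*p)
    (72*a*h*k - 24*a*n*n - 24*b*k*p + 16*b*l*n + 24*c*e*k - 8*c*l*l - 8*e*h*l + 2*l*p*p)
    (24*b*h*k - 8*b*n*n - 24*c*k*p + 16*c*l*n + 72*d*e*k - 24*d*l*l - 8*e*h*n + 2*n*p*p)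
    (24*e*h*k - 8*e*n*n - 8*h*l*l - 6*k*p*p + 8*l*n*p) := by
  simp only [hessianDet, Matrix.det_fin_three, Matrix.of_apply, (pderiv_cub _ _ _ _ _ _ _ _ _ _).1,
    (pderiv_cub _ _ _ _ _ _ _ _ _ _).2.1, (pderiv_cub _ _ _ _ _ _ _ _ _ _).2.2,
    (pderiv_qua _ _ _ _ _ _).1, (pderiv_qua _ _ _ _ _ _).2.1, (pderiv_qua _ _ _ _ _ _).2.2]
  apply MvPolynomial.funext
  intro x
  simp only [cub, map_add, map_sub, map_mul, map_pow, eval_C, eval_X]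
  ring

lemma hessianDet_mul (a b c : MvPolynomial (Fin 3) ℂ) (α β γ : Fin 3 → ℂ)
    (ha : ∀ i, pderiv i a = C (α i)) (hb : ∀ i, pderiv i b = C (β i))
    (hc : ∀ i, pderiv i c = C (γ i)) :
    ∃ t : ℂ, hessianDet (a * b * c) = C t * (a * b * c) := by
  refine ⟨2 * (α 0 * β 1 * γ 2 - α 0 * β 2 * γ 1 - α 1 * β 0 * γ 2 + α 1 * β 2 * γ 0
    + α 2 * β 0 * γ 1 - α 2 * β 1 * γ 0) ^ 2, ?_⟩
  have h2 : (C 2 : MvPolynomial (Fin 3) ℂ) = 2 := map_ofNat C 2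
  simp only [hessianDet, Matrix.det_fin_three, Matrix.of_apply, Derivation.leibniz, ha, hb, hc,
    smul_eq_mul, map_add, map_sub, map_mul, map_pow, pderiv_C, h2]
  ring

lemma pderiv_linear (a₁ a₂ a₃ : ℂ) (i : Fin 3) :
    pderiv i (C a₁ * X 0 + C a₂ * X 1 + C a₃ * X 2) = C (![a₁, a₂, a₃] i) := by
  fin_cases i <;> simp [pderiv_X]

theorem stmt18 (f : MvPolynomial (Fin 3) ℂ) (hf : f.IsHomogeneous 3)
    (h333 : f.coeff (Finsupp.single 2 3) ≠ 0)
    (hdisc : 4 * f.coeff (Finsupp.single 0 2 + Finsupp.single 2 1) *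
        f.coeff (Finsupp.single 1 2 + Finsupp.single 2 1) -
        (f.coeff (Finsupp.single 0 1 + Finsupp.single 1 1 + Finsupp.single 2 1)) ^ 2 ≠ 0) :
    CompletelyReducible f ↔
      ∀ g : MvPolynomial (Fin 3) ℂ,
        g = C ((hessianDet f).coeff (Finsupp.single 2 3)) * f -
              C (f.coeff (Finsupp.single 2 3)) * hessianDet f →
        g.coeff (Finsupp.single 0 2 + Finsupp.single 2 1) = 0 ∧
        g.coeff (Finsupp.single 0 1 + Finsupp.single 1 1 + Finsupp.single 2 1) = 0 ∧
        g.coeff (Finsupp.single 1 2 + Finsupp.single 2 1) = 0 := by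
  constructor
  · rintro ⟨a, b, c, ha, hb, hc, rfl⟩ g rfl
    obtain ⟨a₁, a₂, a₃, rfl⟩ := linear_eq a ha
    obtain ⟨b₁, b₂, b₃, rfl⟩ := linear_eq b hb
    obtain ⟨c₁, c₂, c₃, rfl⟩ := linear_eq c hc
    obtain ⟨t, ht⟩ := hessianDet_mul _ _ _ _ _ _ (pderiv_linear a₁ a₂ a₃) (pderiv_linear b₁ b₂ b₃)
      (pderiv_linear c₁ c₂ c₃)
    rw [ht]
    simp only [coeff_sub, coeff_C_mul]
    refine ⟨?_, ?_, ?_⟩ <;> ring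
  · intro hg
    have hg := hg _ rfl
    have x333 : (Finsupp.single 2 3 : Fin 3 →₀ ℕ) = ex 0 0 3 := by simp [ex]
    have x113 : (Finsupp.single 0 2 + Finsupp.single 2 1 : Fin 3 →₀ ℕ) = ex 2 0 1 := by simp [ex]
    have x123 : (Finsupp.single 0 1 + Finsupp.single 1 1 + Finsupp.single 2 1 : Fin 3 →₀ ℕ)
      = ex 1 1 1 := by simp [ex]
    have x223 : (Finsupp.single 1 2 + Finsupp.single 2 1 : Fin 3 →₀ ℕ) = ex 0 2 1 := by simp [ex]
    simp only [x333, x113, x123, x223] at h333 hdisc hg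
    have hfc := cubic_eq_cub f hf
    generalize coeff (ex 3 0 0) f = a at *
    generalize coeff (ex 2 1 0) f = b at *
    generalize coeff (ex 1 2 0) f = c at *
    generalize coeff (ex 0 3 0) f = d at *
    generalize coeff (ex 2 0 1) f = e at *
    generalize coeff (ex 1 1 1) f = p at *
    generalize coeff (ex 0 2 1) f = h at *
    generalize coeff (ex 1 0 2) f = l at *
    generalize coeff (ex 0 1 2) f = n at *
    generalize coeff (ex 0 0 3) f = k at *
    subst hfc
    rw [hessianDet_cub] at hg
    simp only [coeff_sub, coeff_C_mul, coeff_cub] at hg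
    norm_num at hg
    obtain ⟨g1, g2, g3⟩ := hg
    obtain ⟨a₁, a₂, a₃, b₁, b₂, b₃, c₁, c₂, c₃, H⟩ :=
      converse_num a b c d e p h l n k h333 hdisc g1 g2 g3
    have hl : ∀ r s t : ℂ, IsLinearForm (C r * X 0 + C s * X 1 + C t * X 2) := fun r s t =>
      (((isHomogeneous_X ℂ 0).C_mul r).add ((isHomogeneous_X ℂ 1).C_mul s)).add
        ((isHomogeneous_X ℂ 2).C_mul t)
    refine ⟨_, _, _, hl a₁ a₂ a₃, hl b₁ b₂ b₃, hl c₁ c₂ c₃, ?_⟩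
    apply MvPolynomial.funext
    intro x
    have := H (x 0) (x 1) (x 2)
    simp only [cub, map_add, map_mul, map_pow, eval_C, eval_X]
    exact this
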